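/- Fix positive real numbers ℓ12, ℓ13, ℓ14, ℓ23, ℓ24, and for t > 0 let E(t) be the 4 × 4 symmetric matrix with unit diagonal, entries cosh(ℓ_{ij}) for the pairs (1,2), (1,3), (1,4), (2,3), (2,4), and (3,4)-entry cosh t. Let c_{ij}(t) denote the cofactors of E(t) and Δ(t) = det E(t). Suppose at a point t > 0 that Δ(t) < 0, c_{11}(t) > 0 and c_{44} > 0. Then the function θ14 : s ↦ arccos(−c_{14}(s)/√(c_{11}(s)·c_{44})) is differentiable at t with derivative θ14'(t) = c_{13}(t) · sinh ℓ23 · sinh t / (c_{11}(t) · √(−Δ(t))). -/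

import Mathlib

/-!
With `x = cosh t` as variable, `c₁₄` is affine and `c₁₁` quadratic in `x`, so the derivative of
`-c₁₄/√(c₁₁c₄₄)` is elementary. Two polynomial identities in the entries of the edge matrix then
turn the result of the chain rule for `arccos` into the claimed formula:

* Jacobi's identity for complementary minors, `c₁₁c₄₄ - c₁₄² = -Δ sinh² ℓ₂₃`
  (`cofT_jacobi`), which also keeps the argument of `arccos` strictly inside `(-1, 1)`;
* `(dc₁₄/dx) c₁₁ - c₁₄ (dc₁₁/dx)/2 = c₁₃ sinh² ℓ₂₃` (`cofT_wronskian`).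
-/

open Real

/-- The edge matrix with varying sixth edge length: the 4 × 4 symmetric matrix with
unit diagonal, entries `cosh ℓᵢⱼ` for the pairs `(1,2), (1,3), (1,4), (2,3), (2,4)`,
and `(3,4)`-entry `cosh t`. -/
noncomputable def edgeMatrixT (l12 l13 l14 l23 l24 : ℝ) (t : ℝ) :
    Matrix (Fin 4) (Fin 4) ℝ :=
  !![1, cosh l12, cosh l13, cosh l14;
     cosh l12, 1, cosh l23, cosh l24;
     cosh l13, cosh l23, 1, cosh t;
     cosh l14, cosh l24, cosh t, 1]

/-- The `(i,j)`-cofactor of `edgeMatrixT … t` (0-based indices), as a function of `t`. -/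
noncomputable def cofT (l12 l13 l14 l23 l24 : ℝ) (i j : Fin 4) (t : ℝ) : ℝ :=
  (-1 : ℝ) ^ (i.val + j.val) *
    ((edgeMatrixT l12 l13 l14 l23 l24 t).submatrix i.succAbove j.succAbove).det

lemma cofT_zero_zero (l12 l13 l14 l23 l24 t : ℝ) :
    cofT l12 l13 l14 l23 l24 0 0 t =
      1 + 2 * cosh l23 * cosh l24 * cosh t - cosh l23 ^ 2 - cosh l24 ^ 2 - cosh t ^ 2 := by
  simp [cofT, edgeMatrixT, Matrix.det_fin_three]
  ring

lemma cofT_three_three (l12 l13 l14 l23 l24 t : ℝ) :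
    cofT l12 l13 l14 l23 l24 3 3 t =
      1 + 2 * cosh l12 * cosh l13 * cosh l23 - cosh l12 ^ 2 - cosh l13 ^ 2 - cosh l23 ^ 2 := by
  simp [cofT, edgeMatrixT, Matrix.det_fin_three, Fin.succAbove]
  ring

lemma cofT_zero_three (l12 l13 l14 l23 l24 t : ℝ) :
    cofT l12 l13 l14 l23 l24 0 3 t =
      (cosh l13 - cosh l12 * cosh l23) * cosh t + (cosh l12 * cosh l24 - cosh l14
        - cosh l23 * (cosh l13 * cosh l24 - cosh l23 * cosh l14)) := by
  simp [cofT, edgeMatrixT, Matrix.det_fin_three, Fin.succAbove]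
  ring

lemma cofT_zero_two (l12 l13 l14 l23 l24 t : ℝ) :
    cofT l12 l13 l14 l23 l24 0 2 t =
      cosh l12 * (cosh l23 - cosh t * cosh l24) - (cosh l13 - cosh t * cosh l14)
        + cosh l24 * (cosh l13 * cosh l24 - cosh l23 * cosh l14) := by
  simp [cofT, edgeMatrixT, Matrix.det_fin_three, Fin.succAbove]
  ring

/-- Jacobi's identity for the complementary minors of the edge matrix: rows and columns `1, 4` of
the cofactor matrix against rows and columns `2, 3` of the edge matrix itself. -/
lemma cofT_jacobi (l12 l13 l14 l23 l24 t : ℝ) :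
    cofT l12 l13 l14 l23 l24 0 0 t * cofT l12 l13 l14 l23 l24 3 3 t
        - cofT l12 l13 l14 l23 l24 0 3 t ^ 2 =
      -(edgeMatrixT l12 l13 l14 l23 l24 t).det * sinh l23 ^ 2 := by
  rw [cofT_zero_zero, cofT_three_three, cofT_zero_three, sinh_sq]
  simp [edgeMatrixT, Matrix.det_succ_row_zero, Fin.sum_univ_succ, Fin.succAbove]
  ring

/-- The numerator of the derivative of `c₁₄/√c₁₁` with respect to `cosh t`: here
`cosh ℓ₁₃ - cosh ℓ₁₂ cosh ℓ₂₃` is `dc₁₄/d(cosh t)`, and `cosh ℓ₂₃ cosh ℓ₂₄ - cosh t` is half of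
`dc₁₁/d(cosh t)`. -/
lemma cofT_wronskian (l12 l13 l14 l23 l24 t : ℝ) :
    (cosh l13 - cosh l12 * cosh l23) * cofT l12 l13 l14 l23 l24 0 0 t
        - cofT l12 l13 l14 l23 l24 0 3 t * (cosh l23 * cosh l24 - cosh t) =
      cofT l12 l13 l14 l23 l24 0 2 t * sinh l23 ^ 2 := by
  rw [cofT_zero_zero, cofT_zero_two, cofT_zero_three, sinh_sq]
  ring

lemma hasDerivAt_cofT_zero_zero (l12 l13 l14 l23 l24 t : ℝ) :
    HasDerivAt (cofT l12 l13 l14 l23 l24 0 0)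
      (2 * (cosh l23 * cosh l24 - cosh t) * sinh t) t := by
  rw [funext (cofT_zero_zero l12 l13 l14 l23 l24)]
  have h := hasDerivAt_cosh t
  refine (((((h.const_mul (2 * cosh l23 * cosh l24)).const_add 1).sub_const _).sub_const
    _).sub (h.pow 2)).congr_deriv ?_
  push_cast
  ring

lemma hasDerivAt_cofT_zero_three (l12 l13 l14 l23 l24 t : ℝ) :
    HasDerivAt (cofT l12 l13 l14 l23 l24 0 3)
      ((cosh l13 - cosh l12 * cosh l23) * sinh t) t := by
  rw [funext (cofT_zero_three l12 l13 l14 l23 l24)]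
  exact ((hasDerivAt_cosh t).const_mul _).add_const _

/-- The chain rule for the cosine-rule expression `arccos (-u/√(v k))` with `k` constant, the
factor `√(1 - u²/(v k))` being written through a positive root `w` of `w² = v k - u²`. -/
lemma hasDerivAt_arccos_neg_div_sqrt {u v : ℝ → ℝ} {u' v' k w t : ℝ}
    (hu : HasDerivAt u u' t) (hv : HasDerivAt v v' t) (hvt : 0 < v t) (hk : 0 < k)
    (hw : 0 < w) (hw2 : v t * k - u t ^ 2 = w ^ 2) :
    HasDerivAt (fun s => arccos (-u s / √(v s * k)))
      ((u' * v t - u t * v' / 2) / (v t * w)) t := by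
  have hvk : 0 < v t * k := mul_pos hvt hk
  have hr : 0 < √(v t * k) := sqrt_pos.mpr hvk
  have hr2 : √(v t * k) ^ 2 = v t * k := sq_sqrt hvk.le
  have hq := hu.neg.div ((hv.mul_const k).sqrt hvk.ne') hr.ne'
  have hone : 1 - (-u t / √(v t * k)) ^ 2 = (w / √(v t * k)) ^ 2 := by
    rw [div_pow, div_pow, neg_sq, ← hw2, hr2]
    field_simp
  have hpos : 0 < 1 - (-u t / √(v t * k)) ^ 2 := by
    rw [hone]
    positivity
  have h1 : -u t / √(v t * k) ≠ -1 := by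
    intro h
    rw [h] at hpos
    norm_num at hpos
  have h2 : -u t / √(v t * k) ≠ 1 := by
    intro h
    rw [h] at hpos
    norm_num at hpos
  refine ((hasDerivAt_arccos h1 h2).comp t hq).congr_deriv ?_
  rw [hone, sqrt_sq (by positivity), hr2, Pi.neg_apply]
  generalize √(v t * k) = r at hr hr2
  field_simp
  rw [hr2]
  ring

/-- The derivative of the dihedral angle `θ₁₄ = arccos(−c₁₄(t)/√(c₁₁(t)·c₄₄))` with
respect to the varying edge length `ℓ₃₄ = t` is
`c₁₃(t) · sinh ℓ₂₃ · sinh t / (c₁₁(t) · √(−Δ(t)))`.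
(The cofactor `c₄₄` does not depend on `t`.) -/
theorem deriv_theta14 (l12 l13 l14 l23 l24 : ℝ)
    (h12 : 0 < l12) (h13 : 0 < l13) (h14 : 0 < l14)
    (h23 : 0 < l23) (h24 : 0 < l24) (t : ℝ) (ht : 0 < t)
    (hΔ : (edgeMatrixT l12 l13 l14 l23 l24 t).det < 0)
    (hc11 : 0 < cofT l12 l13 l14 l23 l24 0 0 t)
    (hc44 : 0 < cofT l12 l13 l14 l23 l24 3 3 t) :
    HasDerivAt
      (fun s => Real.arccos (-(cofT l12 l13 l14 l23 l24 0 3 s) /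
        Real.sqrt (cofT l12 l13 l14 l23 l24 0 0 s * cofT l12 l13 l14 l23 l24 3 3 t)))
      (cofT l12 l13 l14 l23 l24 0 2 t * sinh l23 * sinh t /
        (cofT l12 l13 l14 l23 l24 0 0 t *
          Real.sqrt (-(edgeMatrixT l12 l13 l14 l23 l24 t).det))) t := by
  have hs : 0 < sinh l23 := sinh_pos_iff.mpr h23
  have hD : 0 < √(-(edgeMatrixT l12 l13 l14 l23 l24 t).det) := sqrt_pos.mpr (neg_pos.mpr hΔ)
  have hw2 : cofT l12 l13 l14 l23 l24 0 0 t * cofT l12 l13 l14 l23 l24 3 3 t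
      - cofT l12 l13 l14 l23 l24 0 3 t ^ 2 =
      (√(-(edgeMatrixT l12 l13 l14 l23 l24 t).det) * sinh l23) ^ 2 := by
    rw [cofT_jacobi, mul_pow, sq_sqrt (neg_pos.mpr hΔ).le]
  refine (hasDerivAt_arccos_neg_div_sqrt (hasDerivAt_cofT_zero_three l12 l13 l14 l23 l24 t)
    (hasDerivAt_cofT_zero_zero l12 l13 l14 l23 l24 t) hc11 hc44 (mul_pos hD hs)
    hw2).congr_deriv ?_
  have hW := cofT_wronskian l12 l13 l14 l23 l24 t
  rw [div_eq_div_iff (by positivity) (by positivity)]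
  linear_combination sinh t * cofT l12 l13 l14 l23 l24 0 0 t *
    √(-(edgeMatrixT l12 l13 l14 l23 l24 t).det) * hW
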